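/- There exists a polynomial p ∈ ℚ[X] of degree at most m and a natural number s₀ such that for every natural number s ≥ s₀, the transcendence degree over K of the subfield of L generated by K together with all elements δ₁^{e₁}⋯δ_m^{e_m}η_j with e₁+⋯+e_m ≤ s and 1 ≤ j ≤ n equals p(s). (Existence of the Kolchin dimension polynomial, with degree bounded by the number of derivations.) -/

import Mathlib

open Polynomial

/-- Iterated application of the derivations `δ` according to the multi-exponent `e`:
`x ↦ δ₁^[e 1] (δ₂^[e 2] (⋯ (δ_m^[e m] x)))`. -/
def thetaApply {L : Type*} {m : ℕ} (δ : Fin m → L → L) (e : Fin m → ℕ) : L → L :=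
  (List.ofFn (fun i => (δ i)^[e i])).foldr (· ∘ ·) id

/-- A subfield of `L` is a differential subfield if it is closed under each derivation. -/
def IsDiffSubfield {L : Type*} [Field L] {m : ℕ} (δ : Fin m → L → L) (K : Subfield L) : Prop :=
  ∀ i : Fin m, ∀ x ∈ K, δ i x ∈ K

/-- The transcendence degree (as a natural number) of an intermediate field over the base. -/
noncomputable def trdegNat {L : Type*} [Field L] (K : Subfield L) (E : IntermediateField K L) : ℕ :=
  (⨆ s : {s : Set E // AlgebraicIndependent K ((↑) : s → E)}, Cardinal.mk s.1).toNat

/-- `T_{η/K}(s)`: the transcendence degree over `K` of the subfield of `L` generated by `K`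
together with all `δ₁^(e 1) ⋯ δ_m^(e m) (η j)` with `e 1 + ⋯ + e m ≤ s`. -/
noncomputable def diffTrdeg {L : Type*} [Field L] {m n : ℕ} (δ : Fin m → L → L) (K : Subfield L)
    (η : Fin n → L) (s : ℕ) : ℕ :=
  trdegNat K (IntermediateField.adjoin K
    {x : L | ∃ e : Fin m → ℕ, (∑ i, e i) ≤ s ∧ ∃ j : Fin n, x = thetaApply δ e (η j)})

/-- `p` is a Kolchin polynomial of `η` over `K` if `p(s) = T_{η/K}(s)` for all large `s`. -/
def IsKolchinPoly {L : Type*} [Field L] {m n : ℕ} (δ : Fin m → L → L) (K : Subfield L)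
    (η : Fin n → L) (p : ℚ[X]) : Prop :=
  ∃ s₀ : ℕ, ∀ s : ℕ, s₀ ≤ s → p.eval (s : ℚ) = (diffTrdeg δ K η s : ℚ)

/-- `K⟨S⟩`: the smallest differential subfield of `L` containing `K` and `S`. -/
def diffAdjoin {L : Type*} [Field L] {m : ℕ} (δ : Fin m → L → L) (K : Subfield L)
    (S : Set L) : Subfield L :=
  sInf {F : Subfield L | IsDiffSubfield δ F ∧ K ≤ F ∧ S ⊆ F}

/-!
Order the formal derivatives of `η₁, …, η_n` by an orderly ranking. Call a derivative *parametric*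
if it is transcendental over the field generated by `K` and the derivatives of lower rank. Choosing
greedily along the ranking, the parametric derivatives of order at most `s` form a transcendence
basis of the field generated by all derivatives of order at most `s`, so `T_{η/K}(s)` counts them.

If a derivative `v` is algebraic over the field generated by the lower-ranked ones, differentiating
its minimal polynomial, which is separable in characteristic zero, shows that `δᵢ v` even lies in
the field generated by the derivatives ranked below it. Hence for each `j` the exponents of the
parametric derivatives of `ηⱼ` form a lower set in `ℕ^m`. By Dickson's lemma it is obtained from
`ℕ^m` by removing finitely many cones `f + ℕ^m`. The points of degree at most `s ≥ |a|` in a cone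
`a + ℕ^m` number `(s - |a| + m).choose m`, and two cones intersect in a cone, so
inclusion–exclusion makes the count a polynomial of degree at most `m` for large `s`.
-/

section EventuallyPolynomial

open Filter

/-- The functions `ℕ → R` that agree, at all sufficiently large arguments, with a polynomial of
degree at most `d`. They form a submodule, so closure under sums and differences is inherited. -/
def eventuallyPolynomial (R : Type*) [CommSemiring R] (d : ℕ) : Submodule R (ℕ → R) where
  carrier := {f | ∃ p : R[X], p.natDegree ≤ d ∧ ∀ᶠ s : ℕ in atTop, p.eval (s : R) = f s}
  zero_mem' := ⟨0, by simp⟩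
  add_mem' := by
    rintro f g ⟨p, hp, hpf⟩ ⟨q, hq, hqg⟩
    refine ⟨p + q, natDegree_add_le_of_degree_le hp hq, ?_⟩
    filter_upwards [hpf, hqg] with s hs ht
    rw [eval_add, hs, ht, Pi.add_apply]
  smul_mem' := by
    rintro c f ⟨p, hp, hpf⟩
    refine ⟨c • p, (natDegree_smul_le c p).trans hp, ?_⟩
    filter_upwards [hpf] with s hs
    rw [eval_smul, hs, Pi.smul_apply]

lemma choose_sub_add_mem_eventuallyPolynomial (d k : ℕ) :
    (fun s ↦ ((s - k + d).choose d : ℚ)) ∈ eventuallyPolynomial ℚ d := by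
  refine ⟨preHilbertPoly ℚ d k, (natDegree_preHilbertPoly ℚ d k).le, ?_⟩
  filter_upwards [eventually_ge_atTop k] with s hs
  exact preHilbertPoly_eq_choose_sub_add ℚ d hs

lemma mem_eventuallyPolynomial_congr {R : Type*} [CommSemiring R] {d : ℕ} {f g : ℕ → R}
    (hfg : f =ᶠ[atTop] g) : f ∈ eventuallyPolynomial R d ↔ g ∈ eventuallyPolynomial R d :=
  exists_congr fun _ ↦ and_congr_right fun _ ↦
    ⟨fun h ↦ EventuallyEq.trans h hfg, fun h ↦ EventuallyEq.trans h hfg.symm⟩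

end EventuallyPolynomial

section LowerSets

variable {σ : Type*}

lemma isLowerSet_of_add_single_mem {B : Set (σ →₀ ℕ)}
    (hB : ∀ e i, e + Finsupp.single i 1 ∈ B → e ∈ B) : IsLowerSet B := by
  suffices h : ∀ c e : σ →₀ ℕ, e + c ∈ B → e ∈ B by
    intro e' e hle he'
    obtain ⟨c, rfl⟩ := exists_add_of_le hle
    exact h c e he'
  intro c
  induction c using Finsupp.induction_linear with
  | zero => simp
  | add c c' ih ih' => exact fun e he ↦ ih e (ih' _ (by rwa [add_assoc]))
  | single i k =>
    induction k with
    | zero => simp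
    | succ k ih => exact fun e he ↦ ih e (hB _ i (by rwa [add_assoc, ← Finsupp.single_add]))

lemma exists_finset_mem_iff_of_isLowerSet {α : Type*} [PartialOrder α] [WellQuasiOrderedLE α]
    {B : Set α} (hB : IsLowerSet B) :
    ∃ F : Finset α, ∀ e, e ∈ B ↔ ∀ f ∈ F, ¬ f ≤ e := by
  have hfin : {a | Minimal (· ∈ Bᶜ) a}.Finite :=
    WellQuasiOrderedLE.finite_of_isAntichain (setOfPred_minimal_antichain _)
  refine ⟨hfin.toFinset, fun e ↦ ⟨fun he f hf hfe ↦ ?_, fun h ↦ ?_⟩⟩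
  · exact (hfin.mem_toFinset.mp hf).prop (hB hfe he)
  · by_contra he
    obtain ⟨f, hfe, hf⟩ := exists_minimal_le_of_wellFoundedLT (· ∈ Bᶜ) e he
    exact h f (hfin.mem_toFinset.mpr hf) hfe

variable [Fintype σ]

lemma ncard_setOf_degree_le (s : ℕ) :
    {e : σ →₀ ℕ | e.degree ≤ s}.ncard = (s + Fintype.card σ).choose (Fintype.card σ) := by
  classical
  have hset : {e : σ →₀ ℕ | e.degree ≤ s} =
      ((Finset.range (s + 1)).biUnion Finset.univ.finsuppAntidiag : Finset (σ →₀ ℕ)) := by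
    ext e
    simp [Finsupp.degree_eq_sum]
  have hdisj : Set.PairwiseDisjoint (Finset.range (s + 1))
      (Finset.univ.finsuppAntidiag : ℕ → Finset (σ →₀ ℕ)) := by
    intro k _ l _ hkl
    refine Finset.disjoint_left.mpr fun e hk hl ↦ hkl ?_
    rw [Finset.mem_finsuppAntidiag] at hk hl
    exact hk.1.symm.trans hl.1
  rw [hset, Set.ncard_coe_finset, Finset.card_biUnion hdisj]
  simp_rw [Finset.card_finsuppAntidiag_nat_eq_multichoose]
  exact Nat.sum_range_multichoose s _

lemma ncard_setOf_le_degree_le {a : σ →₀ ℕ} {s : ℕ} (has : a.degree ≤ s) :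
    {e : σ →₀ ℕ | a ≤ e ∧ e.degree ≤ s}.ncard =
      (s - a.degree + Fintype.card σ).choose (Fintype.card σ) := by
  have himage : {e : σ →₀ ℕ | a ≤ e ∧ e.degree ≤ s} =
      (a + ·) '' {c | c.degree ≤ s - a.degree} := by
    ext e
    constructor
    · rintro ⟨hae, he⟩
      obtain ⟨c, rfl⟩ := exists_add_of_le hae
      exact ⟨c, Nat.le_sub_of_add_le' (by rwa [← map_add]), rfl⟩
    · rintro ⟨c, hc, rfl⟩
      refine ⟨le_self_add, ?_⟩
      rw [map_add]
      exact Nat.add_le_of_le_sub' has hc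
  rw [himage, Set.ncard_image_of_injective _ (add_right_injective a), ncard_setOf_degree_le]

lemma ncard_setOf_le_avoiding_mem_eventuallyPolynomial (F : Finset (σ →₀ ℕ)) (a : σ →₀ ℕ) :
    (fun s ↦ ({e | a ≤ e ∧ e.degree ≤ s ∧ ∀ f ∈ F, ¬ f ≤ e}.ncard : ℚ)) ∈
      eventuallyPolynomial ℚ (Fintype.card σ) := by
  classical
  induction F using Finset.induction_on generalizing a with
  | empty =>
    refine (mem_eventuallyPolynomial_congr ?_).mpr
      (choose_sub_add_mem_eventuallyPolynomial (Fintype.card σ) a.degree)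
    filter_upwards [Filter.eventually_ge_atTop a.degree] with s hs
    simp [ncard_setOf_le_degree_le hs]
  | insert b F _ ih =>
    convert sub_mem (ih a) (ih (a ⊔ b)) using 1
    funext s
    have hfin : {e | a ≤ e ∧ e.degree ≤ s ∧ ∀ f ∈ F, ¬ f ≤ e}.Finite :=
      (Finsupp.finite_of_degree_le s).subset fun e he ↦ he.2.1
    have hinter : {e | a ⊔ b ≤ e ∧ e.degree ≤ s ∧ ∀ f ∈ F, ¬ f ≤ e} =
        {e | a ≤ e ∧ e.degree ≤ s ∧ ∀ f ∈ F, ¬ f ≤ e} ∩ Set.Ici b := by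
      ext e
      simp only [sup_le_iff, Set.mem_ofPred_eq, Set.mem_inter_iff, Set.mem_Ici]
      tauto
    have hsdiff : {e | a ≤ e ∧ e.degree ≤ s ∧ ∀ f ∈ insert b F, ¬ f ≤ e} =
        {e | a ≤ e ∧ e.degree ≤ s ∧ ∀ f ∈ F, ¬ f ≤ e} \ Set.Ici b := by
      ext e
      simp only [Finset.forall_mem_insert, Set.mem_ofPred_eq, Set.mem_sdiff, Set.mem_Ici]
      tauto
    rw [Pi.sub_apply, hinter, hsdiff, eq_sub_iff_add_eq', ← Nat.cast_add,
      Set.ncard_inter_add_ncard_sdiff_eq_ncard _ _ hfin]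

lemma ncard_mem_eventuallyPolynomial_of_isLowerSet {B : Set (σ →₀ ℕ)} (hB : IsLowerSet B) :
    (fun s ↦ ({e ∈ B | e.degree ≤ s}.ncard : ℚ)) ∈ eventuallyPolynomial ℚ (Fintype.card σ) := by
  obtain ⟨F, hF⟩ := exists_finset_mem_iff_of_isLowerSet hB
  convert ncard_setOf_le_avoiding_mem_eventuallyPolynomial F 0 using 5 with s e
  simp [hF, and_comm]

end LowerSets

section Matroid

lemma isBasis_setOf_notMem_closure_Iio {ι : Type*} [LinearOrder ι] [WellFoundedLT ι]
    (M : Matroid ι) [M.Finitary] {S : Set ι} (hSE : S ⊆ M.E) (hS : IsLowerSet S) :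
    M.IsBasis {i ∈ S | i ∉ M.closure (Set.Iio i)} S := by
  set B := {i ∈ S | i ∉ M.closure (Set.Iio i)}
  have hBS : B ⊆ S := Set.sep_subset _ _
  have hindep : M.Indep B := by
    by_contra hdep
    obtain ⟨C, hCB, hC⟩ := ((M.not_indep_iff (hBS.trans hSE)).mp hdep).exists_isCircuit_subset
    obtain ⟨i, hiC, hmax⟩ := hC.finite.exists_maximal hC.nonempty
    refine (hCB hiC).2 (M.closure_subset_closure ?_ (hC.mem_closure_sdiff_singleton_of_mem hiC))
    rintro j ⟨hjC, hji⟩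
    exact lt_of_le_of_ne (not_lt.mp fun hij ↦ hij.not_ge (hmax hjC hij.le)) hji
  refine hindep.isBasis_of_subset_of_subset_closure hBS fun i hi ↦ ?_
  induction i using WellFoundedLT.induction with
  | ind i ih =>
    by_cases hiB : i ∈ M.closure (Set.Iio i)
    · have hIio : Set.Iio i ⊆ M.closure B := fun j hj ↦ ih j hj (hS (le_of_lt hj) hi)
      exact M.closure_subset_closure_of_subset_closure hIio hiB
    · exact M.mem_closure_of_mem ⟨hi, hiB⟩ (hBS.trans hSE)

end Matroid

section Transcendence

open IntermediateField AlgebraicIndependent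

variable {K L : Type*} [Field K] [Field L] [Algebra K L]

lemma mem_matroid_closure_iff_isAlgebraic_adjoin {S : Set L} {a : L} :
    a ∈ (matroid K L).closure S ↔ IsAlgebraic (adjoin K S) a := by
  rw [matroid_closure_eq, SetLike.mem_coe, Subalgebra.mem_algebraicClosure, isAlgebraic_adjoin_iff]

lemma coe_adjoin_subset_matroid_closure (S : Set L) :
    (adjoin K S : Set L) ⊆ (matroid K L).closure S := fun a ha ↦
  mem_matroid_closure_iff_isAlgebraic_adjoin.mpr
    (isAlgebraic_algebraMap (⟨a, ha⟩ : adjoin K S))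

lemma matroid_eq_comap_val (E : IntermediateField K L) :
    matroid K E = (matroid K L).comap ((↑) : E → L) := by
  refine Matroid.ext_indep rfl fun I _ ↦ ?_
  rw [Matroid.comap_indep_iff_of_injOn Subtype.val_injective.injOn, matroid_indep_iff,
    matroid_indep_iff]
  exact (E.val.algebraicIndependent_iff E.val.injective).symm.trans
    (algebraicIndependent_image Subtype.val_injective.injOn)

lemma trdeg_eq_cRk_matroid (E : IntermediateField K L) :
    Algebra.trdeg K E = (matroid K L).cRk E := by
  rw [← matroid_cRank_eq, ← Matroid.cRk_ground, matroid_e, matroid_eq_comap_val, Matroid.cRk_comap,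
    Set.image_univ, Subtype.range_coe]

lemma trdeg_adjoin_eq_cRk_matroid (S : Set L) :
    Algebra.trdeg K (adjoin K S) = (matroid K L).cRk S := by
  rw [trdeg_eq_cRk_matroid]
  refine Matroid.cRk_closure_congr (Set.Subset.antisymm ?_ ?_)
  · exact Matroid.closure_subset_closure_of_subset_closure (coe_adjoin_subset_matroid_closure S)
  · exact Matroid.closure_subset_closure _ (subset_adjoin K S)

end Transcendence

section Derivation

open IntermediateField

variable {K L : Type*} [Field K] [Field L] [Algebra K L] {D : Derivation ℤ L L}

lemma derivation_mem_of_mem_adjoin {S : Set L} {M : IntermediateField K L}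
    (hK : ∀ a : K, D (algebraMap K L a) ∈ M) (hSM : S ⊆ M) (hS : ∀ a ∈ S, D a ∈ M) {a : L}
    (ha : a ∈ adjoin K S) : D a ∈ M := by
  have hle : adjoin K S ≤ M := adjoin_le_iff.mpr hSM
  induction ha using adjoin_induction with
  | mem a ha => exact hS a ha
  | algebraMap a => exact hK a
  | add a b _ _ ha hb => rw [map_add]; exact add_mem ha hb
  | inv a haS ha =>
    rw [D.leibniz_inv]
    exact mul_mem (neg_mem (pow_mem (inv_mem (hle haS)) 2)) ha
  | mul a b haS hbS ha hb =>
    rw [D.leibniz]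
    exact add_mem (mul_mem (hle haS) hb) (mul_mem (hle hbS) ha)

lemma derivation_aeval_sub_mem {F M : IntermediateField K L} (hF : ∀ a ∈ F, D a ∈ M) {v : L}
    (hv : v ∈ M) (P : F[X]) : D (aeval v P) - aeval v P.derivative * D v ∈ M := by
  rw [D.apply_aeval_eq, smul_eq_mul, add_sub_cancel_right]
  induction P using Polynomial.induction_on' with
  | add P Q hP hQ =>
    simp only [map_add]
    exact add_mem hP hQ
  | monomial n c =>
    rw [Derivation.mapCoeffs_monomial, PolynomialModule.map_single, PolynomialModule.eval_single]
    exact mul_mem (pow_mem hv n) (hF c c.2)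

lemma derivation_mem_of_isSeparable {F M : IntermediateField K L} (hFM : F ≤ M)
    (hF : ∀ a ∈ F, D a ∈ M) {v : L} (hvM : v ∈ M) (hv : IsSeparable F v) : D v ∈ M := by
  have hderiv : aeval v (minpoly F v).derivative ≠ 0 :=
    Separable.aeval_derivative_ne_zero hv (minpoly.aeval F v)
  have haeval : aeval v (minpoly F v).derivative ∈ M := by
    rw [aeval_eq_sum_range]
    exact sum_mem fun i _ ↦ mul_mem (hFM (Subtype.prop _)) (pow_mem hvM i)
  have h := derivation_aeval_sub_mem hF hvM (minpoly F v)
  rw [minpoly.aeval, map_zero, zero_sub, neg_mem_iff] at h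
  simpa [hderiv] using mul_mem (inv_mem haeval) h

lemma derivation_mem_adjoin_of_isAlgebraic [CharZero L]
    (hK : ∀ a : K, D (algebraMap K L a) ∈ (algebraMap K L).range) {S T : Set L} (hST : S ⊆ T)
    (hS : ∀ a ∈ S, D a ∈ T) {v : L} (hvT : v ∈ T) (hv : IsAlgebraic (adjoin K S) v) :
    D v ∈ adjoin K T := by
  have : CharZero (adjoin K S) := (algebraMap (adjoin K S) L).charZero
  have hsep : IsSeparable (adjoin K S) v := (minpoly.irreducible hv.isIntegral).separable
  have hT : T ⊆ adjoin K T := subset_adjoin K T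
  refine derivation_mem_of_isSeparable (adjoin.mono K S T hST) (fun a ha ↦ ?_) (hT hvT) hsep
  refine derivation_mem_of_mem_adjoin (fun b ↦ ?_) (hST.trans hT) (fun b hb ↦ hT (hS b hb)) ha
  obtain ⟨c, hc⟩ := hK b
  exact hc ▸ (adjoin K T).algebraMap_mem c

lemma exists_derivation_coe_eq {ι R : Type*} [CommRing R] {δ : ι → R → R}
    (hadd : ∀ i x y, δ i (x + y) = δ i x + δ i y)
    (hleib : ∀ i x y, δ i (x * y) = x * δ i y + δ i x * y) :
    ∃ D : ι → Derivation ℤ R R, δ = fun i ↦ ⇑(D i) :=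
  ⟨fun i ↦ .mk' (AddMonoidHom.mk' (δ i) (hadd i)).toIntLinearMap fun x y ↦
    (hleib i x y).trans (by rw [mul_comm (δ i x)]; rfl), rfl⟩

end Derivation

section Theta

variable {L : Type*} {m : ℕ}

lemma thetaApply_succ (δ : Fin (m + 1) → L → L) (e : Fin (m + 1) → ℕ) (x : L) :
    thetaApply δ e x = (δ 0)^[e 0] (thetaApply (Fin.tail δ) (Fin.tail e) x) := by
  simp [thetaApply, List.ofFn_succ, Fin.tail_def]

lemma thetaApply_add_single {δ : Fin m → L → L} (hδ : ∀ i j, Function.Commute (δ i) (δ j))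
    (e : Fin m → ℕ) (i : Fin m) (x : L) :
    thetaApply δ (e + Pi.single i 1) x = δ i (thetaApply δ e x) := by
  induction m with
  | zero => exact i.elim0
  | succ m ih =>
    rw [thetaApply_succ, thetaApply_succ]
    cases i using Fin.cases with
    | zero =>
      have htail : Fin.tail (e + Pi.single 0 1) = Fin.tail e := by
        ext j
        simp [Fin.tail]
      rw [htail, Pi.add_apply, Pi.single_eq_same, Function.iterate_succ_apply']
    | succ i =>
      have htail : Fin.tail (e + Pi.single i.succ 1) = Fin.tail e + Pi.single i 1 := by
        ext j
        simp [Fin.tail, Pi.single_apply]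
      rw [htail, ih (δ := Fin.tail δ) fun _ _ ↦ hδ _ _, Pi.add_apply,
        Pi.single_eq_of_ne (Fin.succ_ne_zero i).symm, add_zero]
      exact ((hδ i.succ 0).iterate_right (e 0) _).symm

end Theta

section Ranking

variable {m n : ℕ}

/-- Formal derivatives `θ yⱼ` of `n` differential indeterminates under `m` derivations, `θ` being
encoded by its exponent vector. The order, by degree first, is an orderly ranking. -/
abbrev DerivIndex (m n : ℕ) : Type := DegLex (Fin m →₀ ℕ) ×ₗ Fin n

namespace DerivIndex

/-- The formal derivative `θ yⱼ` with `θ` of exponent vector `e`. -/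
def mk (e : Fin m →₀ ℕ) (j : Fin n) : DerivIndex m n := toLex (toDegLex e, j)

/-- The exponent vector of `θ` in the formal derivative `θ yⱼ`. -/
def exponent (t : DerivIndex m n) : Fin m →₀ ℕ := ofDegLex (ofLex t).1

/-- The indeterminate of a formal derivative, namely `j` for `θ yⱼ`. -/
def var (t : DerivIndex m n) : Fin n := (ofLex t).2

@[simp] lemma exponent_mk (e : Fin m →₀ ℕ) (j : Fin n) : (mk e j).exponent = e := rfl

@[simp] lemma var_mk (e : Fin m →₀ ℕ) (j : Fin n) : (mk e j).var = j := rfl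

lemma mk_add_lt_mk_add {e e' : Fin m →₀ ℕ} {j j' : Fin n} (h : mk e j < mk e' j')
    (c : Fin m →₀ ℕ) : mk (e + c) j < mk (e' + c) j' := by
  simpa [mk, Prod.Lex.toLex_lt_toLex, toDegLex_add] using h

lemma mk_lt_mk_add_single (e : Fin m →₀ ℕ) (i : Fin m) (j : Fin n) :
    mk e j < mk (e + Finsupp.single i 1) j :=
  Prod.Lex.toLex_lt_toLex.mpr (.inl (Finsupp.DegLex.lt_iff.mpr (.inl (by simp))))

lemma monotone_degree_exponent : Monotone fun t : DerivIndex m n ↦ t.exponent.degree :=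
  fun _ _ h ↦ Finsupp.DegLex.monotone_degree (Prod.Lex.monotone_fst _ _ h)

lemma finite_setOf_degree_exponent_le (s : ℕ) :
    {t : DerivIndex m n | t.exponent.degree ≤ s}.Finite :=
  (((Finsupp.finite_of_degree_le s).prod Set.finite_univ).image (Function.uncurry mk)).subset
    fun t ht ↦ ⟨(t.exponent, t.var), ⟨ht, trivial⟩, rfl⟩

lemma ncard_eq_sum_ncard_mk_mem {T : Set (DerivIndex m n)} (hT : T.Finite) :
    T.ncard = ∑ j, {e | mk e j ∈ T}.ncard := by
  have hfin (j : Fin n) : Finite {e | mk e j ∈ T} :=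
    hT.preimage fun _ _ _ _ h ↦ congrArg exponent h
  simp_rw [← Nat.card_coe_set_eq]
  rw [← Nat.card_sigma]
  exact Nat.card_congr
    { toFun := fun t ↦ ⟨t.1.var, t.1.exponent, t.2⟩
      invFun := fun u ↦ ⟨mk u.2.1 u.1, u.2.2⟩
      left_inv := fun _ ↦ rfl
      right_inv := fun _ ↦ rfl }

end DerivIndex

end Ranking

section Kolchin

open AlgebraicIndependent IntermediateField DerivIndex

variable {L : Type*} {m n : ℕ}

/-- The family of all derivatives of the tuple `η`, indexed by the formal derivatives. -/
def derivFamily (δ : Fin m → L → L) (η : Fin n → L) (t : DerivIndex m n) : L :=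
  thetaApply δ t.exponent (η t.var)

lemma derivFamily_add_single {δ : Fin m → L → L} (hδ : ∀ i j, Function.Commute (δ i) (δ j))
    (η : Fin n → L) (e : Fin m →₀ ℕ) (i : Fin m) (j : Fin n) :
    derivFamily δ η (mk (e + Finsupp.single i 1) j) = δ i (derivFamily δ η (mk e j)) := by
  simp only [derivFamily, exponent_mk, var_mk, Finsupp.coe_add, Finsupp.single_eq_pi_single,
    thetaApply_add_single hδ]

variable (K : Type*) [Field K] [Field L] [Algebra K L]

/-- Exponents of the parametric derivatives of `ηⱼ`: those transcendental over the field generated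
by `K` and the derivatives of lower rank. -/
def parametricExponents (δ : Fin m → L → L) (η : Fin n → L) (j : Fin n) : Set (Fin m →₀ ℕ) :=
  {e | derivFamily δ η (mk e j) ∉
    (matroid K L).closure (derivFamily δ η '' Set.Iio (mk e j))}

variable {K} in
lemma isLowerSet_parametricExponents [CharZero L] {D : Fin m → Derivation ℤ L L}
    (hD : ∀ i j, Function.Commute (D i) (D j))
    (hK : ∀ i (a : K), D i (algebraMap K L a) ∈ (algebraMap K L).range) (η : Fin n → L)
    (j : Fin n) : IsLowerSet (parametricExponents K (fun i ↦ D i) η j) := by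
  refine isLowerSet_of_add_single_mem fun e i ↦ not_imp_not.mpr fun he ↦ ?_
  set x := derivFamily (fun i ↦ D i) η
  have hx (t : DerivIndex m n) : D i (x t) = x (mk (t.exponent + Finsupp.single i 1) t.var) :=
    (derivFamily_add_single hD η t.exponent i t.var).symm
  have hlt := mk_lt_mk_add_single e i j
  have hxS : ∀ a ∈ x '' Set.Iio (mk e j), D i a ∈ x '' Set.Iio (mk (e + Finsupp.single i 1) j) := by
    rintro _ ⟨t, ht, rfl⟩
    exact ⟨_, mk_add_lt_mk_add ht _, (hx t).symm⟩
  have hmem := derivation_mem_adjoin_of_isAlgebraic (hK i)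
    (Set.image_mono (Set.Iio_subset_Iio hlt.le)) hxS ⟨_, hlt, rfl⟩
    (mem_matroid_closure_iff_isAlgebraic_adjoin.mp he)
  rw [hx] at hmem
  exact coe_adjoin_subset_matroid_closure _ hmem

lemma toNat_trdeg_adjoin_derivFamily (δ : Fin m → L → L) (η : Fin n → L) (s : ℕ) :
    (Algebra.trdeg K (adjoin K (derivFamily δ η '' {t | t.exponent.degree ≤ s}))).toNat =
      ∑ j, {e ∈ parametricExponents K δ η j | e.degree ≤ s}.ncard := by
  set x := derivFamily δ η
  set S : Set (DerivIndex m n) := {t | t.exponent.degree ≤ s}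
  have hS : IsLowerSet S := fun _ _ hut ht ↦ (monotone_degree_exponent hut).trans ht
  have hbasis := isBasis_setOf_notMem_closure_Iio ((matroid K L).comap x) (fun _ _ ↦ trivial) hS
  rw [trdeg_adjoin_eq_cRk_matroid, ← Cardinal.toNat_toENat, Matroid.toENat_cRk_eq,
    ← Matroid.eRk_comap, ← hbasis.encard_eq_eRk, ← Set.ncard_def,
    ncard_eq_sum_ncard_mk_mem ((finite_setOf_degree_exponent_le s).subset hbasis.subset)]
  refine Finset.sum_congr rfl fun j _ ↦ congrArg Set.ncard (Set.ext fun e ↦ ?_)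
  simp [S, x, parametricExponents, and_comm]

lemma diffTrdeg_eq_toNat_trdeg (δ : Fin m → L → L) (K : Subfield L) (η : Fin n → L) (s : ℕ) :
    diffTrdeg δ K η s =
      (Algebra.trdeg K (adjoin K (derivFamily δ η '' {t | t.exponent.degree ≤ s}))).toNat := by
  have hset : {x : L | ∃ e : Fin m → ℕ, (∑ i, e i) ≤ s ∧ ∃ j : Fin n, x = thetaApply δ e (η j)} =
      derivFamily δ η '' {t | t.exponent.degree ≤ s} := by
    ext x
    constructor
    · rintro ⟨e, he, j, rfl⟩
      exact ⟨mk (Finsupp.equivFunOnFinite.symm e) j, by simpa [Finsupp.degree_eq_sum] using he, rfl⟩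
    · rintro ⟨t, ht, rfl⟩
      exact ⟨t.exponent, by rwa [← Finsupp.degree_eq_sum], t.var, rfl⟩
  rw [diffTrdeg, hset]
  rfl

end Kolchin

/-- Existence of the Kolchin dimension polynomial: there is a rational polynomial `p` of degree
at most `m` and an `s₀` such that for all `s ≥ s₀`, the transcendence degree over `K` of the
field generated by `K` and the derivatives of order `≤ s` of the tuple `η` equals `p(s)`. -/
theorem kolchin_dimension_polynomial_exists
    {L : Type*} [Field L] [CharZero L] {m : ℕ} (hm : 1 ≤ m)
    (δ : Fin m → L → L)
    (hadd : ∀ i : Fin m, ∀ x y : L, δ i (x + y) = δ i x + δ i y)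
    (hleib : ∀ i : Fin m, ∀ x y : L, δ i (x * y) = x * δ i y + δ i x * y)
    (hcomm : ∀ i j : Fin m, ∀ x : L, δ i (δ j x) = δ j (δ i x))
    (K : Subfield L) (hK : IsDiffSubfield δ K)
    {n : ℕ} (η : Fin n → L) :
    ∃ p : ℚ[X], p.natDegree ≤ m ∧
      ∃ s₀ : ℕ, ∀ s : ℕ, s₀ ≤ s → p.eval (s : ℚ) = (diffTrdeg δ K η s : ℚ) := by
  obtain ⟨D, rfl⟩ := exists_derivation_coe_eq hadd hleib
  have hlower (j : Fin n) : IsLowerSet (parametricExponents K (fun i ↦ D i) η j) :=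
    isLowerSet_parametricExponents hcomm (fun i a ↦ ⟨⟨D i a, hK i a a.2⟩, rfl⟩) η j
  have hsum := sum_mem fun j (_ : j ∈ Finset.univ) ↦
    ncard_mem_eventuallyPolynomial_of_isLowerSet (hlower j)
  obtain ⟨p, hp, hps⟩ : (fun s ↦ (diffTrdeg (fun i ↦ D i) K η s : ℚ)) ∈
      eventuallyPolynomial ℚ m := by
    simpa only [diffTrdeg_eq_toNat_trdeg, toNat_trdeg_adjoin_derivFamily, Nat.cast_sum,
      Finset.sum_fn, Fintype.card_fin] using hsum
  exact ⟨p, hp, Filter.eventually_atTop.mp hps⟩
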